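/- Let x₀ < ⋯ < xₙ be real nodes, let x̂₀ = x₀ < x̂₁ < ⋯ < x̂_{n−1} < x̂ₙ = xₙ, let y, z ∈ ℝ^{n+1} with z_k = z_k(x, x̂), let ĉ_k := (x̂_{k−1} + x̂_k)/2, let v̂ be the family consisting of the x̂_k and the ĉ_k, and set a_{k,j} := (z_j − P_z(ĉ_k))·ℓ_j(ĉ_k). Then max_{t ∈ [x₀, xₙ]} |E(t; y, z)| ≤ Λ(v̂)·(max_{1≤k≤n} |y_k − y_{k−1}|/(x̂_k − x̂_{k−1}))·b_n(x̂, z), where b_n(x̂, z) := max_{1≤k≤n} Σ_{i=1}^n (x̂_i − x̂_{i−1})·|Σ_{j=i}^n a_{k,j}| and Λ(v̂) is the Lebesgue constant of the 2n+1 points v̂ over [x₀, xₙ]. -/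

import Mathlib

/-- Barycentric weight `λ_k(x) = 1 / ∏_{j ≠ k} (x_k - x_j)`. -/
noncomputable def lam {n : ℕ} (x : Fin (n + 1) → ℝ) (k : Fin (n + 1)) : ℝ :=
  (∏ j ∈ Finset.univ.erase k, (x k - x j))⁻¹

/-- Relative error in the weights `z_k(x, x̂)`. -/
noncomputable def zk {n : ℕ} (x xh : Fin (n + 1) → ℝ) (k : Fin (n + 1)) : ℝ :=
  (lam x k - lam xh k) / lam xh k

/-- The Error Polynomial `E(t; y, z) = P_{yz}(t) - P_y(t)·P_z(t)` for nodes `xh`. -/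
noncomputable def errP {n : ℕ} (xh y z : Fin (n + 1) → ℝ) (t : ℝ) : ℝ :=
  (Lagrange.interpolate Finset.univ xh (fun k => y k * z k)).eval t -
    (Lagrange.interpolate Finset.univ xh y).eval t *
      (Lagrange.interpolate Finset.univ xh z).eval t

/-- The midpoints `ĉ_k = (x̂_{k-1} + x̂_k)/2`; `ch xh k` is the midpoint of the
interval `[x̂_k, x̂_{k+1}]`, i.e. `ĉ_{k+1}` for `k = 0, …, n-1`. -/
noncomputable def ch {n : ℕ} (xh : Fin (n + 1) → ℝ) (k : Fin n) : ℝ :=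
  (xh k.castSucc + xh k.succ) / 2

/-- The coefficients `a_{k,j} = (z_j − P_z(ĉ_k))·ℓ_j(ĉ_k)`, with `k : Fin n`
representing the index `k+1 ∈ {1, …, n}`. -/
noncomputable def coefA {n : ℕ} (xh z : Fin (n + 1) → ℝ) (k : Fin n) (j : Fin (n + 1)) : ℝ :=
  (z j - (Lagrange.interpolate Finset.univ xh z).eval (ch xh k)) *
    (Lagrange.basis Finset.univ xh j).eval (ch xh k)

/-- The quantity `b_n(x̂, z) = max_{1≤k≤n} ∑_{i=1}^n (x̂_i − x̂_{i-1})·|∑_{j=i}^n a_{k,j}|`. -/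
noncomputable def bn {n : ℕ} (hn0 : 0 < n) (xh z : Fin (n + 1) → ℝ) : ℝ :=
  Finset.univ.sup' ⟨⟨0, hn0⟩, Finset.mem_univ _⟩ fun k : Fin n =>
    ∑ i : Fin n, (xh i.succ - xh i.castSucc) *
      |∑ j ∈ Finset.univ.filter (fun j : Fin (n + 1) => (i : ℕ) + 1 ≤ (j : ℕ)),
        coefA xh z k j|

/-- The Lebesgue constant of the node family `v` over the interval `[a, b]`. -/
noncomputable def leb {ι : Type*} [Fintype ι] [DecidableEq ι] (v : ι → ℝ) (a b : ℝ) : ℝ :=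
  ⨆ t : Set.Icc a b, ∑ k, |(Lagrange.basis Finset.univ v k).eval (t : ℝ)|

/-!
`E(·; y, z)` has degree at most `2n`, so it is its own interpolant at the `2n + 1` points `v̂`, and
on the interval `|E|` is at most `Λ(v̂)` times its largest absolute value on `v̂`. It vanishes at
every `x̂_k`, so only the midpoints matter. There `E(ĉ_k) = ∑_j y_j a_{k,j}` with
`∑_j a_{k,j} = 0`, because the Lagrange basis sums to `1`; summation by parts turns this into
`∑_i (y_i - y_{i-1}) ∑_{j ≥ i} a_{k,j}`, and bounding each difference of `y` by the largest slope
times `x̂_i - x̂_{i-1}` produces `b_n`.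
-/

open Finset Polynomial

section SummationByParts

theorem sum_mul_eq_add_sum_sub_mul_sum_Ioi {R : Type*} [Ring R] {n : ℕ}
    (y a : Fin (n + 1) → R) :
    ∑ j, y j * a j =
      y 0 * ∑ j, a j + ∑ i : Fin n, (y i.succ - y i.castSucc) * ∑ j ∈ Ioi i.castSucc, a j := by
  induction n with
  | zero => simp
  | succ n ih =>
    have tail := ih (fun j => y j.succ) (fun j => a j.succ)
    simp only [← Fin.sum_Ioi_succ, Fin.succ_castSucc, Fin.succ_zero_eq_one] at tail
    rw [Fin.sum_univ_succ, tail, Fin.sum_univ_succ a,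
      Fin.sum_univ_succ fun i => (y i.succ - y i.castSucc) * ∑ j ∈ Ioi i.castSucc, a j]
    simp only [Fin.castSucc_zero, Fin.sum_Ioi_zero, Fin.succ_zero_eq_one]
    noncomm_ring

theorem abs_sum_mul_le_of_abs_sub_le {R : Type*} [Ring R] [LinearOrder R]
    [IsOrderedRing R] {n : ℕ} {x y a : Fin (n + 1) → R} {M : R} (ha : ∑ j, a j = 0)
    (hy : ∀ i : Fin n, |y i.succ - y i.castSucc| ≤ M * (x i.succ - x i.castSucc)) :
    |∑ j, y j * a j| ≤
      M * ∑ i : Fin n, (x i.succ - x i.castSucc) * |∑ j ∈ Ioi i.castSucc, a j| := by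
  rw [sum_mul_eq_add_sum_sub_mul_sum_Ioi, ha, mul_zero, zero_add, mul_sum]
  refine (abs_sum_le_sum_abs _ _).trans (sum_le_sum fun i _ => ?_)
  rw [abs_mul, ← mul_assoc]
  exact mul_le_mul_of_nonneg_right (hy i) (abs_nonneg _)

end SummationByParts

section Interpolation

variable {F ι : Type*} [Field F] [DecidableEq ι] {s : Finset ι} {v : ι → F}

theorem eval_interpolate_eq_sum (s : Finset ι) (v r : ι → F) (t : F) :
    (Lagrange.interpolate s v r).eval t = ∑ i ∈ s, r i * (Lagrange.basis s v i).eval t := by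
  simp [Lagrange.interpolate_apply, eval_finsetSum]

theorem sum_sub_eval_interpolate_mul_eval_basis (hv : Set.InjOn v s) (r : ι → F) (t : F) :
    ∑ i ∈ s, (r i - (Lagrange.interpolate s v r).eval t) * (Lagrange.basis s v i).eval t = 0 := by
  rcases s.eq_empty_or_nonempty with rfl | hs
  · simp
  have basis_sum_eq_one : ∑ i ∈ s, (Lagrange.basis s v i).eval t = 1 := by
    rw [← eval_finsetSum, Lagrange.sum_basis hv hs, eval_one]
  simp only [sub_mul, sum_sub_distrib, ← mul_sum, basis_sum_eq_one, mul_one,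
    ← eval_interpolate_eq_sum, sub_self]

theorem natDegree_interpolate_le (hv : Set.InjOn v s) (r : ι → F) :
    (Lagrange.interpolate s v r).natDegree ≤ #s - 1 :=
  natDegree_le_of_degree_le (Lagrange.degree_interpolate_le r hv)

/-- The failure of interpolation at the nodes `v` to be multiplicative, `P_{yz} - P_y * P_z`. This
is `errP` as a polynomial, over any field and any finite family of nodes. -/
noncomputable def interpolateMulError (s : Finset ι) (v y z : ι → F) : F[X] :=
  Lagrange.interpolate s v (fun i => y i * z i) -
    Lagrange.interpolate s v y * Lagrange.interpolate s v z

theorem natDegree_interpolateMulError_le (hv : Set.InjOn v s) (y z : ι → F) :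
    (interpolateMulError s v y z).natDegree ≤ 2 * (#s - 1) := by
  have hyz := natDegree_interpolate_le hv (fun i => y i * z i)
  have hmul := natDegree_mul_le_of_le (natDegree_interpolate_le hv y)
    (natDegree_interpolate_le hv z)
  exact (natDegree_sub_le_of_le hyz hmul).trans (by omega)

theorem eval_interpolateMulError_at_node (hv : Set.InjOn v s) (y z : ι → F) {i : ι} (hi : i ∈ s) :
    (interpolateMulError s v y z).eval (v i) = 0 := by
  simp only [interpolateMulError, eval_sub, eval_mul, Lagrange.eval_interpolate_at_node _ hv hi,
    sub_self]

theorem eval_interpolateMulError_eq_sum (s : Finset ι) (v y z : ι → F) (t : F) :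
    (interpolateMulError s v y z).eval t =
      ∑ i ∈ s, y i *
        ((z i - (Lagrange.interpolate s v z).eval t) * (Lagrange.basis s v i).eval t) := by
  rw [interpolateMulError, eval_sub, eval_mul, eval_interpolate_eq_sum s v (fun i => y i * z i),
    eval_interpolate_eq_sum s v y, sum_mul, ← sum_sub_distrib]
  exact sum_congr rfl fun i _ => by ring

theorem abs_eval_le_sum_abs_eval_basis_mul [LinearOrder F] [IsOrderedRing F]
    (hv : Set.InjOn v s) {f : F[X]} (hf : f.degree < #s) {B : F}
    (hB : ∀ i ∈ s, |f.eval (v i)| ≤ B) (t : F) :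
    |f.eval t| ≤ (∑ i ∈ s, |(Lagrange.basis s v i).eval t|) * B :=
  calc |f.eval t|
      = |∑ i ∈ s, f.eval (v i) * (Lagrange.basis s v i).eval t| := by
        rw [← eval_interpolate_eq_sum s v (fun i => f.eval (v i)), ← Lagrange.eq_interpolate hv hf]
    _ ≤ ∑ i ∈ s, |f.eval (v i)| * |(Lagrange.basis s v i).eval t| := by
        simpa only [abs_mul] using
          abs_sum_le_sum_abs (fun i => f.eval (v i) * (Lagrange.basis s v i).eval t) s
    _ ≤ ∑ i ∈ s, B * |(Lagrange.basis s v i).eval t| :=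
        sum_le_sum fun i hi => mul_le_mul_of_nonneg_right (hB i hi) (abs_nonneg _)
    _ = (∑ i ∈ s, |(Lagrange.basis s v i).eval t|) * B := by rw [← mul_sum, mul_comm]

end Interpolation

section LebesgueConstant

variable {ι : Type*} [Fintype ι] [DecidableEq ι] {a b t : ℝ}

-- Boundedness of the Lebesgue function is what keeps `⨆` in `leb` from taking its junk value `0`.
theorem sum_abs_eval_basis_le_leb (v : ι → ℝ) (ht : t ∈ Set.Icc a b) :
    ∑ i, |(Lagrange.basis univ v i).eval t| ≤ leb v a b := by
  have continuous_lebesgueFunction : Continuous fun t : Set.Icc a b =>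
      ∑ i, |(Lagrange.basis univ v i).eval (t : ℝ)| := by fun_prop
  exact le_ciSup (isCompact_range continuous_lebesgueFunction).bddAbove ⟨t, ht⟩

theorem abs_eval_le_leb_mul {v : ι → ℝ} (hv : Function.Injective v) {f : ℝ[X]}
    (hf : f.degree < Fintype.card ι) {B : ℝ} (hB₀ : 0 ≤ B) (hB : ∀ i, |f.eval (v i)| ≤ B)
    (ht : t ∈ Set.Icc a b) : |f.eval t| ≤ leb v a b * B :=
  (abs_eval_le_sum_abs_eval_basis_mul hv.injOn hf (fun i _ => hB i) t).trans
    (mul_le_mul_of_nonneg_right (sum_abs_eval_basis_le_leb v ht) hB₀)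

end LebesgueConstant

theorem injective_sumElim_of_mem_Ioo {α : Type*} [Preorder α] {n : ℕ} {x : Fin (n + 1) → α}
    {c : Fin n → α} (hx : StrictMono x) (hc : ∀ k, c k ∈ Set.Ioo (x k.castSucc) (x k.succ)) :
    Function.Injective (Sum.elim x c) := by
  have strictMono_c : StrictMono c := fun i j hij =>
    calc c i < x i.succ := (hc i).2
      _ ≤ x j.castSucc := hx.monotone (Fin.succ_le_castSucc_iff.mpr hij)
      _ < c j := (hc j).1
  refine hx.injective.sumElim strictMono_c.injective fun i k hik => ?_
  have castSucc_lt : k.castSucc < i := hx.lt_iff_lt.mp (hik ▸ (hc k).1)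
  have lt_succ : i < k.succ := hx.lt_iff_lt.mp (hik ▸ (hc k).2)
  exact (Fin.castSucc_lt_iff_succ_le.mp castSucc_lt).not_gt lt_succ

/-- The largest absolute slope of the piecewise linear interpolant of the data `y` at the nodes
`xh`, which bounds the differences of `y` in the summation by parts. -/
noncomputable def maxSlope {n : ℕ} (hn0 : 0 < n) (xh y : Fin (n + 1) → ℝ) : ℝ :=
  univ.sup' ⟨⟨0, hn0⟩, mem_univ _⟩
    fun k : Fin n => |y k.succ - y k.castSucc| / (xh k.succ - xh k.castSucc)

section ErrorPolynomial

variable {n : ℕ} {xh : Fin (n + 1) → ℝ}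

theorem ch_mem_Ioo (hxh : StrictMono xh) (k : Fin n) :
    ch xh k ∈ Set.Ioo (xh k.castSucc) (xh k.succ) :=
  have hlt := hxh (Fin.castSucc_lt_succ (i := k))
  ⟨left_lt_add_div_two.mpr hlt, add_div_two_lt_right.mpr hlt⟩

theorem abs_sub_le_maxSlope_mul (hn0 : 0 < n) (hxh : StrictMono xh) (y : Fin (n + 1) → ℝ)
    (k : Fin n) :
    |y k.succ - y k.castSucc| ≤ maxSlope hn0 xh y * (xh k.succ - xh k.castSucc) :=
  (div_le_iff₀ (sub_pos.mpr (hxh Fin.castSucc_lt_succ))).mp <|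
    le_sup' (fun k : Fin n => |y k.succ - y k.castSucc| / (xh k.succ - xh k.castSucc)) (mem_univ k)

theorem maxSlope_nonneg (hn0 : 0 < n) (hxh : StrictMono xh) (y : Fin (n + 1) → ℝ) :
    0 ≤ maxSlope hn0 xh y :=
  nonneg_of_mul_nonneg_left
    ((abs_nonneg _).trans (abs_sub_le_maxSlope_mul hn0 hxh y ⟨0, hn0⟩))
    (sub_pos.mpr (hxh Fin.castSucc_lt_succ))

theorem sum_sub_mul_abs_sum_coefA_le_bn (hn0 : 0 < n) (xh z : Fin (n + 1) → ℝ) (k : Fin n) :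
    ∑ i : Fin n, (xh i.succ - xh i.castSucc) * |∑ j ∈ Ioi i.castSucc, coefA xh z k j| ≤
      bn hn0 xh z := by
  have Ioi_eq_filter (i : Fin n) :
      Ioi i.castSucc = univ.filter fun j : Fin (n + 1) => (i : ℕ) + 1 ≤ (j : ℕ) := by
    ext j
    simp [Fin.lt_def]
  simp only [Ioi_eq_filter]
  exact le_sup' (fun k : Fin n => ∑ i : Fin n, (xh i.succ - xh i.castSucc) *
    |∑ j ∈ univ.filter (fun j : Fin (n + 1) => (i : ℕ) + 1 ≤ (j : ℕ)), coefA xh z k j|) (mem_univ k)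

theorem eval_interpolateMulError_univ (xh y z : Fin (n + 1) → ℝ) (t : ℝ) :
    (interpolateMulError univ xh y z).eval t = errP xh y z t := by
  simp [interpolateMulError, errP]

theorem abs_errP_ch_le (hn0 : 0 < n) (hxh : StrictMono xh) (y z : Fin (n + 1) → ℝ) (k : Fin n) :
    |errP xh y z (ch xh k)| ≤ maxSlope hn0 xh y * bn hn0 xh z := by
  have sum_coefA : ∑ j, coefA xh z k j = 0 :=
    sum_sub_eval_interpolate_mul_eval_basis hxh.injective.injOn z (ch xh k)
  calc |errP xh y z (ch xh k)|
      = |∑ j, y j * coefA xh z k j| := by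
        rw [← eval_interpolateMulError_univ, eval_interpolateMulError_eq_sum]
        rfl
    _ ≤ maxSlope hn0 xh y *
          ∑ i : Fin n, (xh i.succ - xh i.castSucc) * |∑ j ∈ Ioi i.castSucc, coefA xh z k j| :=
        abs_sum_mul_le_of_abs_sub_le sum_coefA (abs_sub_le_maxSlope_mul hn0 hxh y)
    _ ≤ maxSlope hn0 xh y * bn hn0 xh z :=
        mul_le_mul_of_nonneg_left (sum_sub_mul_abs_sum_coefA_le_bn hn0 xh z k)
          (maxSlope_nonneg hn0 hxh y)

theorem degree_interpolateMulError_lt_card_sum (hxh : Function.Injective xh)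
    (y z : Fin (n + 1) → ℝ) :
    (interpolateMulError univ xh y z).degree < Fintype.card (Fin (n + 1) ⊕ Fin n) := by
  refine (degree_le_of_natDegree_le
    (natDegree_interpolateMulError_le hxh.injOn y z)).trans_lt ?_
  simp only [card_univ, Fintype.card_sum, Fintype.card_fin, Nat.cast_lt]
  omega

end ErrorPolynomial

theorem stmt_9_general {n : ℕ} (hn0 : 0 < n) (xh y z : Fin (n + 1) → ℝ) (hxh : StrictMono xh)
    {a b : ℝ} (hab : a ≤ b) :
    (⨆ t : Set.Icc a b, |errP xh y z (t : ℝ)|) ≤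
      leb (Sum.elim xh (ch xh)) a b * maxSlope hn0 xh y * bn hn0 xh z := by
  have := Set.nonempty_Icc_subtype hab
  have bound_midpoint := abs_errP_ch_le hn0 hxh y z
  have bound_nonneg : 0 ≤ maxSlope hn0 xh y * bn hn0 xh z :=
    (abs_nonneg _).trans (bound_midpoint ⟨0, hn0⟩)
  refine ciSup_le fun t => ?_
  rw [← eval_interpolateMulError_univ, mul_assoc]
  refine abs_eval_le_leb_mul (injective_sumElim_of_mem_Ioo hxh (ch_mem_Ioo hxh))
    (degree_interpolateMulError_lt_card_sum hxh.injective y z) bound_nonneg ?_ t.2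
  rintro (k | k)
  · simpa [eval_interpolateMulError_at_node hxh.injective.injOn y z (mem_univ k)]
      using bound_nonneg
  · simpa [eval_interpolateMulError_univ] using bound_midpoint k

theorem stmt_9 {n : ℕ} (hn0 : 0 < n) (x xh y : Fin (n + 1) → ℝ)
    (hx : StrictMono x) (hxh : StrictMono xh)
    (h0 : xh 0 = x 0) (hn : xh (Fin.last n) = x (Fin.last n)) :
    (⨆ t : Set.Icc (x 0) (x (Fin.last n)), |errP xh y (zk x xh) (t : ℝ)|) ≤
      leb (Sum.elim xh (ch xh) : Fin (n + 1) ⊕ Fin n → ℝ) (x 0) (x (Fin.last n)) *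
        (Finset.univ.sup' ⟨⟨0, hn0⟩, Finset.mem_univ _⟩
          fun k : Fin n => |y k.succ - y k.castSucc| / (xh k.succ - xh k.castSucc)) *
        bn hn0 xh (zk x xh) := by
  exact stmt_9_general hn0 xh y (zk x xh) hxh (hx.monotone (Fin.zero_le _))
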